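/- (Z_p-Tucker lemma.) Let p be a prime number, n, m ≥ 1 integers, α ≤ m, and let λ : (Z_p ∪ {0})^n \ {(0,…,0)} → Z_p × [m], written λ(x) = (s(x), v(x)), be a Z_p-equivariant map satisfying: (i) for all x⁽¹⁾ ⊆ x⁽²⁾ in (Z_p ∪ {0})^n \ {(0,…,0)}, if v(x⁽¹⁾) = v(x⁽²⁾) ≤ α, then s(x⁽¹⁾) = s(x⁽²⁾); and (ii) for all chains x⁽¹⁾ ⊆ x⁽²⁾ ⊆ ⋯ ⊆ x⁽ᵖ⁾ in (Z_p ∪ {0})^n \ {(0,…,0)}, if v(x⁽¹⁾) = v(x⁽²⁾) = ⋯ = v(x⁽ᵖ⁾) ≥ α + 1, then the values s(x⁽¹⁾), …, s(x⁽ᵖ⁾) are not pairwise distinct. Then α + (m − α)(p − 1) ≥ n. -/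

import Mathlib

set_option linter.unusedSectionVars false

namespace ZpT

variable {p : ℕ} {ι κ : Type}

/-- Shift a vertex. -/
def shv (j : ZMod p) (a : ι × ZMod p) : ι × ZMod p := (a.1, a.2 + j)

/-- Functions on lists of vertices: cochains. -/
abbrev Co (p : ℕ) (ι : Type) := List (ι × ZMod p) → ZMod p

/-- Prefixing. -/
def pre (a : ι × ZMod p) : Co p ι →ₗ[ZMod p] Co p ι :=
  LinearMap.funLeft (ZMod p) (ZMod p) (fun l => a :: l)

@[simp] lemma pre_apply (a : ι × ZMod p) (f : Co p ι) (l) : pre a f l = f (a :: l) := rfl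

def sh (j : ZMod p) : Co p ι →ₗ[ZMod p] Co p ι :=
  LinearMap.funLeft (ZMod p) (ZMod p) (fun l => l.map (shv j))

@[simp] lemma sh_apply (j : ZMod p) (f : Co p ι) (l) : sh j f l = f (l.map (shv j)) := rfl

/-- The coboundary evaluated at a list. -/
def dl : List (ι × ZMod p) → (Co p ι →ₗ[ZMod p] ZMod p)
  | [] => 0
  | a :: l => LinearMap.proj l - (dl l).comp (pre a)

def del : Co p ι →ₗ[ZMod p] Co p ι := LinearMap.pi dl

@[simp] lemma del_nil (f : Co p ι) : del f [] = 0 := rfl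

@[simp] lemma del_cons (f : Co p ι) (a l) : del f (a :: l) = f l - del (pre a f) l := rfl

lemma pre_del (f : Co p ι) (a) : pre a (del f) = f - del (pre a f) := by
  funext l; simp

lemma del_del (f : Co p ι) : del (del f) = 0 := by
  funext l
  induction l generalizing f with
  | nil => rfl
  | cons a l ih =>
    simp only [del_cons, pre_del, map_sub, Pi.sub_apply, ih]
    simp

lemma sh_pre (j : ZMod p) (a) (f : Co p ι) : pre a (sh j f) = sh j (pre (shv j a) f) := by
  funext l; simp

lemma del_sh (j : ZMod p) (f : Co p ι) : del (sh j f) = sh j (del f) := by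
  funext l
  induction l generalizing f with
  | nil => rfl
  | cons a l ih =>
    simp only [del_cons, sh_pre, ih, sh_apply, List.map_cons]

lemma del_local (f : Co p ι) (l) (h : ∀ l', l'.Sublist l → f l' = 0) : del f l = 0 := by
  induction l generalizing f with
  | nil => rfl
  | cons a l ih =>
    rw [del_cons, h l (List.sublist_cons_self a l), ih, sub_zero]
    intro l' hl'
    exact h _ (hl'.cons_cons a)

lemma sh_sh (i j : ZMod p) (f : Co p ι) : sh i (sh j f) = sh (i + j) f := by
  funext l
  simp only [sh_apply, List.map_map]
  congr 1
  apply List.map_congr_left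
  intro a _
  simp [shv, add_assoc]

lemma sh_zero (f : Co p ι) : sh 0 f = f := by
  funext l
  have : (shv 0 : ι × ZMod p → ι × ZMod p) = id := by
    funext a; simp [shv]
  simp [this]

variable [Fact p.Prime]

def T (k : ℕ) : Co p ι →ₗ[ZMod p] Co p ι :=
  if Even k then sh 1 - LinearMap.id else ∑ j : ZMod p, sh j

lemma T_even {k : ℕ} (hk : Even k) (f : Co p ι) : T k f = sh 1 f - f := by
  simp [T, hk]

lemma T_odd {k : ℕ} (hk : ¬ Even k) (f : Co p ι) : T k f = ∑ j : ZMod p, sh j f := by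
  simp [T, hk]

lemma T_add_two (k : ℕ) (f : Co p ι) : T (k + 2) f = T k f := by
  simp [T, Nat.even_add]

lemma sh_N (i : ZMod p) (f : Co p ι) : sh i (∑ j : ZMod p, sh j f) = ∑ j : ZMod p, sh j f := by
  rw [map_sum]
  simp only [sh_sh]
  exact Fintype.sum_equiv (Equiv.addLeft i) _ _ (fun j => rfl)

lemma N_sh (i : ZMod p) (f : Co p ι) : ∑ j : ZMod p, sh j (sh i f) = ∑ j : ZMod p, sh j f := by
  simp only [sh_sh]
  exact Fintype.sum_equiv (Equiv.addRight i) _ _ (fun j => rfl)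

lemma T_T (k : ℕ) (f : Co p ι) : T k (T (k + 1) f) = 0 := by
  by_cases hk : Even k
  · rw [T_even hk, T_odd (by simpa [Nat.even_add_one] using hk), sh_N, sub_self]
  · rw [T_odd hk, T_even (by simpa [Nat.even_add_one] using hk)]
    simp only [map_sub, Finset.sum_sub_distrib, N_sh, sub_self]

lemma del_T (k : ℕ) (f : Co p ι) : del (T k f) = T k (del f) := by
  by_cases hk : Even k
  · simp [T_even hk, del_sh]
  · simp [T_odd hk, del_sh]

/-! Subdivision -/

def Sd (Λ : List (ι × ZMod p) → κ × ZMod p) : ℕ → (Co p κ →ₗ[ZMod p] Co p ι)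
  | 0 => LinearMap.pi fun w => match w with
      | [] => LinearMap.proj []
      | _ :: _ => 0
  | k + 1 => LinearMap.pi fun w => (dl w).comp ((Sd Λ k).comp (pre (Λ w)))

variable (Λ : List (ι × ZMod p) → κ × ZMod p)

lemma Sd_zero_nil (f : Co p κ) : Sd Λ 0 f [] = f [] := rfl
lemma Sd_zero_cons (f : Co p κ) (a l) : Sd Λ 0 f (a :: l) = 0 := rfl
lemma Sd_succ (k : ℕ) (f : Co p κ) (w) : Sd Λ (k + 1) f w = del (Sd Λ k (pre (Λ w) f)) w := rfl

lemma Sd_del (k : ℕ) (f : Co p κ) : Sd Λ (k + 1) (del f) = del (Sd Λ k f) := by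
  induction k generalizing f with
  | zero =>
    funext w
    rw [Sd_succ, pre_del, map_sub, map_sub]
    have : Sd Λ 0 (del (pre (Λ w) f)) = 0 := by
      funext w'
      cases w' <;> rfl
    rw [this]; simp
  | succ k ih =>
    funext w
    rw [Sd_succ, pre_del, map_sub, map_sub, ih, del_del, sub_zero]

lemma Sd_sh (hΛ : ∀ j w, w ≠ [] → Λ (w.map (shv j)) = shv j (Λ w)) (k : ℕ) (j : ZMod p)
    (f : Co p κ) : Sd Λ k (sh j f) = sh j (Sd Λ k f) := by
  induction k generalizing f with
  | zero =>
    funext w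
    cases w <;> rfl
  | succ k ih =>
    funext w
    cases w with
    | nil => rfl
    | cons a l =>
      rw [Sd_succ, sh_pre, ih, del_sh, sh_apply, sh_apply, Sd_succ, hΛ _ _ (by simp)]

lemma Sd_T (hΛ : ∀ j w, w ≠ [] → Λ (w.map (shv j)) = shv j (Λ w)) (k i : ℕ)
    (f : Co p κ) : Sd Λ k (T i f) = T i (Sd Λ k f) := by
  by_cases hk : Even i
  · simp [T_even hk, Sd_sh Λ hΛ]
  · simp [T_odd hk, Sd_sh Λ hΛ]

/-! The chains h -/

def hh (n : ℕ) [NeZero n] : ℕ → (Co p (Fin n) →ₗ[ZMod p] ZMod p)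
  | 0 => LinearMap.proj [(Fin.ofNat n 0, 0)]
  | k + 1 => (hh n k).comp ((T k).comp (pre (Fin.ofNat n (k + 1), 0)))

lemma hh_zero (n : ℕ) [NeZero n] (f : Co p (Fin n)) : hh n 0 f = f [(Fin.ofNat n 0, 0)] := rfl

lemma hh_succ (n : ℕ) [NeZero n] (k) (f : Co p (Fin n)) :
    hh n (k + 1) f = hh n k (T k (pre (Fin.ofNat n (k + 1), 0) f)) := rfl

lemma hh_del (n : ℕ) [NeZero n] (k) (f : Co p (Fin n)) :
    hh n (k + 1) (del f) = hh n k (T k f) := by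
  induction k generalizing f with
  | zero =>
    rw [hh_succ, pre_del, map_sub, map_sub, ← del_T, hh_zero n (del _), del_cons, del_nil, sub_zero]
    simp [T_even]
  | succ k ih =>
    rw [hh_succ, pre_del, map_sub, map_sub, ← del_T, ih, T_T, map_zero, sub_zero]

lemma keys_shv (j : ZMod p) (w : List (ι × ZMod p)) :
    (w.map (shv j)).map Prod.fst = w.map Prod.fst := by
  simp [shv, Function.comp_def]

lemma hh_local (n : ℕ) [NeZero n] (k) (hk : k < n) (f : Co p (Fin n))
    (h : ∀ w : List (Fin n × ZMod p), (w.map Prod.fst).Nodup → (∀ i ∈ w.map Prod.fst, i.val ≤ k) →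
      w.length = k + 1 → f w = 0) : hh n k f = 0 := by
  induction k generalizing f with
  | zero =>
    rw [hh_zero]
    exact h _ (by simp) (by simp) (by simp)
  | succ k ih =>
    rw [hh_succ]
    apply ih (by omega)
    have key : ∀ w : List (Fin n × ZMod p), (w.map Prod.fst).Nodup →
        (∀ i ∈ w.map Prod.fst, i.val ≤ k) → w.length = k + 1 →
        pre (Fin.ofNat n (k + 1), 0) f w = 0 := by
      intro w h1 h2 h3
      have e : (Fin.ofNat n (k + 1)).val = k + 1 := by simp [Nat.mod_eq_of_lt hk]
      apply h
      · rw [List.map_cons, List.nodup_cons]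
        refine ⟨fun hm => ?_, h1⟩
        have := h2 _ hm
        simp only at this
        omega
      · intro i hi
        rw [List.map_cons, List.mem_cons] at hi
        rcases hi with rfl | hi
        · simp only; omega
        · have := h2 _ hi; omega
      · simp [h3]
    intro w h1 h2 h3
    have key' : ∀ j, sh j (pre (Fin.ofNat n (k + 1), 0) f) w = 0 := by
      intro j
      rw [sh_apply]
      apply key
      · rwa [keys_shv]
      · rwa [keys_shv]
      · simpa using h3
    by_cases hk : Even k
    · rw [T_even hk, Pi.sub_apply, key', key w h1 h2 h3, sub_zero]
    · rw [T_odd hk, Finset.sum_apply]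
      exact Finset.sum_eq_zero (fun j _ => key' j)

/-! Alternating functions -/

def Alt (f : Co p ι) : Prop :=
  (∀ u a t, f (u ++ a :: a :: t) = 0) ∧
    ∀ u a b t, f (u ++ a :: b :: t) = - f (u ++ b :: a :: t)

lemma Alt.pre {f : Co p ι} (hf : Alt f) (a) : Alt (pre a f) :=
  ⟨fun u b t => hf.1 (a :: u) b t, fun u b c t => hf.2 (a :: u) b c t⟩

lemma Alt.del {f : Co p ι} (hf : Alt f) : Alt (del f) := by
  constructor
  · intro u a t
    induction u generalizing f with
    | nil =>
      have : ZpT.del (ZpT.pre a (ZpT.pre a f)) t = 0 :=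
        del_local _ _ (fun l' _ => hf.1 [] a l')
      simp [this]
    | cons c u ih =>
      have := hf.1 u a t
      rw [List.cons_append, del_cons, this, ih (hf.pre c), sub_zero]
  · intro u a b t
    induction u generalizing f with
    | nil =>
      have : ZpT.del (ZpT.pre b (ZpT.pre a f) + ZpT.pre a (ZpT.pre b f)) t = 0 :=
        del_local _ _ (fun l' _ => by
          have := hf.2 [] a b l'
          simp only [List.nil_append] at this
          simp [this])
      rw [map_add, Pi.add_apply] at this
      simp only [List.nil_append, del_cons, pre_apply]
      linear_combination this
    | cons c u ih =>
      have := hf.2 u a b t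
      rw [List.cons_append, del_cons, this, ih (hf.pre c), List.cons_append, del_cons]
      ring

lemma Alt.zero_of_dup {f : Co p ι} (hf : Alt f) (v u a t) : f (u ++ a :: (v ++ a :: t)) = 0 := by
  induction v generalizing u with
  | nil => exact hf.1 u a t
  | cons b v ih =>
    have := ih (u ++ [b])
    rw [List.cons_append, hf.2]
    simpa using this

lemma Alt.zero_of_not_nodup {f : Co p ι} (hf : Alt f) (l) (hl : ¬ l.Nodup) : f l = 0 := by
  rw [← List.exists_duplicate_iff_not_nodup] at hl
  obtain ⟨x, hx⟩ := hl
  rw [List.duplicate_iff_sublist] at hx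
  obtain ⟨r₁, r₂, rfl, h1, h2⟩ := List.cons_sublist_iff.1 hx
  obtain ⟨a, b, rfl⟩ := List.append_of_mem h1
  rw [List.singleton_sublist] at h2
  obtain ⟨c, d, rfl⟩ := List.append_of_mem h2
  have := hf.zero_of_dup (b ++ c) a x d
  simpa using this

/-! Valid lists -/

open Classical in
noncomputable def B (k : ι) (l : List (ι × ZMod p)) : Finset (ZMod p) :=
  Finset.univ.filter (fun a => (k, a) ∈ l)

lemma mem_B {k : ι} {l : List (ι × ZMod p)} {a} : a ∈ B k l ↔ (k, a) ∈ l := by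
  simp [B]

lemma B_shift (k : ι) (l : List (ι × ZMod p)) (j : ZMod p) :
    B k (l.map (shv j)) = (B k l).map (Equiv.addRight j).toEmbedding := by
  ext a
  simp only [mem_B, List.mem_map, Finset.mem_map, shv]
  constructor
  · rintro ⟨⟨k', b⟩, h, h'⟩
    simp only [Prod.mk.injEq] at h'
    obtain ⟨rfl, rfl⟩ := h'
    exact ⟨b, h, rfl⟩
  · rintro ⟨b, h, rfl⟩
    exact ⟨(k, b), h, rfl⟩

def Valid (cap : ι → ℕ) (l : List (ι × ZMod p)) : Prop := ∀ k, (B k l).card ≤ cap k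

lemma Valid.shift {cap : ι → ℕ} {l : List (ι × ZMod p)} (h : Valid cap l) (j : ZMod p) :
    Valid cap (l.map (shv j)) := by
  intro k
  rw [B_shift, Finset.card_map]
  exact h k

lemma Valid.sublist {cap : ι → ℕ} {l l' : List (ι × ZMod p)} (h : Valid cap l)
    (hl : l'.Sublist l) : Valid cap l' := by
  intro k
  refine le_trans (Finset.card_le_card ?_) (h k)
  intro a
  simp only [mem_B]
  exact fun ha => hl.subset ha

lemma Valid.length_le [Fintype ι] {cap : ι → ℕ} {l : List (ι × ZMod p)} (h : Valid cap l)
    (hl : l.Nodup) : l.length ≤ ∑ k, cap k := by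
  classical
  have : l.toFinset = Finset.univ.biUnion
      (fun k => (B k l).map ⟨fun a => (k, a), fun a b h => by simpa using h⟩) := by
    ext ⟨k, a⟩
    simp only [List.mem_toFinset, Finset.mem_biUnion, Finset.mem_univ, true_and, Finset.mem_map,
      mem_B]
    constructor
    · intro h
      exact ⟨k, a, h, rfl⟩
    · rintro ⟨k', a', h, h2⟩
      have h3 : (k', a') = (k, a) := h2
      rw [← h3]
      exact h
  rw [← List.toFinset_card_of_nodup hl, this]
  refine le_trans Finset.card_biUnion_le ?_
  apply Finset.sum_le_sum
  intro k _
  rw [Finset.card_map]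
  exact h k

open Classical in
noncomputable def pick [Inhabited ι] (S : Set ι) : ι := if h : S.Nonempty then h.some else default

noncomputable def tk [Inhabited ι] (l : List (ι × ZMod p)) : ι := pick {k | (B k l).Nonempty}

noncomputable def tf [Inhabited ι] (l : List (ι × ZMod p)) : ZMod p :=
  (∑ a ∈ B (tk l) l, a) / ((B (tk l) l).card : ZMod p)

lemma tf_congr [Inhabited ι] {l l' : List (ι × ZMod p)} (h : ∀ x, x ∈ l ↔ x ∈ l') :
    tf l = tf l' := by
  have : ∀ k, B k l = B k l' := by
    intro k; ext a; simp [mem_B, h]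
  simp [tf, tk, this]

lemma tf_shift [Inhabited ι] {cap : ι → ℕ} (hcap : ∀ k, cap k < p) {l : List (ι × ZMod p)}
    (h : Valid cap l) (hl : l ≠ []) (j : ZMod p) : tf (l.map (shv j)) = tf l + j := by
  have e : tk (l.map (shv j)) = tk l := by
    simp [tk, B_shift]
  have hne : (B (tk l) l).Nonempty := by
    have : Set.Nonempty {k | (B k l).Nonempty} := by
      obtain ⟨⟨k, a⟩, t, rfl⟩ := List.exists_cons_of_ne_nil hl
      exact ⟨k, a, by simp [mem_B]⟩
    have h2 : tk l = this.some := by rw [tk, pick, dif_pos this]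
    rw [h2]
    exact this.some_mem
  have hc : ((B (tk l) l).card : ZMod p) ≠ 0 := by
    rw [Ne, ZMod.natCast_eq_zero_iff]
    intro hd
    have := Nat.le_of_dvd hne.card_pos hd
    have := h (tk l)
    have := hcap (tk l)
    omega
  rw [tf, e, B_shift, Finset.card_map, Finset.sum_map, tf]
  simp only [Equiv.coe_toEmbedding, Equiv.coe_addRight, Finset.sum_add_distrib, Finset.sum_const,
    nsmul_eq_mul]
  field_simp

lemma ind_identity (j t : ZMod p) :
    ((if j.val < (t + 1).val then 1 else 0 : ZMod p)) - (if j.val < t.val then 1 else 0)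
      = (if j = t then 1 else 0) - (if t = -1 then 1 else 0) := by
  have hp : 1 < p := (Fact.out : p.Prime).one_lt
  have hjt : j = t ↔ j.val = t.val := (ZMod.val_injective p).eq_iff.symm
  have hj := ZMod.val_lt j
  have ht := ZMod.val_lt t
  have h1 : (1 : ZMod p).val = 1 := ZMod.val_one p
  by_cases h : t = -1
  · subst h
    have hv : (-1 : ZMod p).val = p - 1 := by
      rw [ZMod.neg_val, if_neg one_ne_zero, h1]
    simp only [hjt, hv, neg_add_cancel, ZMod.val_zero]
    by_cases hh : j.val = p - 1
    · simp [hh]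
    · have : j.val < p - 1 := by omega
      simp [hh, this]
  · have hlt : t.val + (1 : ZMod p).val < p := by
      by_contra hcon
      apply h
      have : t.val = p - 1 := by omega
      rw [eq_neg_iff_add_eq_zero, ← ZMod.natCast_zmod_val t, this]
      have : ((p - 1 + 1 : ℕ) : ZMod p) = 0 := by
        rw [Nat.sub_add_cancel hp.le]; simp
      simpa using this
    simp only [ZMod.val_add_of_lt hlt, h1, hjt]
    rcases lt_trichotomy j.val t.val with hh | hh | hh
    · simp [hh, h, hh.ne, show j.val < t.val + 1 by omega]
    · simp [hh, h]
    · simp [h, hh.ne', show ¬ j.val < t.val + 1 by omega, show ¬ j.val < t.val by omega]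

lemma inv_sh {cap : ι → ℕ} {f : Co p ι} (h : ∀ l, Valid cap l → f (l.map (shv 1)) = f l)
    (j : ZMod p) (l) (hl : Valid cap l) : f (l.map (shv j)) = f l := by
  have : ∀ N : ℕ, sh (N : ZMod p) f l = f l := by
    intro N
    induction N with
    | zero => rw [Nat.cast_zero, sh_zero]
    | succ N ih =>
      rw [Nat.cast_succ, ← sh_sh, sh_apply, sh_apply, h _ (hl.shift _)]
      exact ih
  have := this j.val
  rwa [ZMod.natCast_zmod_val] at this

lemma solve [Inhabited ι] {cap : ι → ℕ} (hcap : ∀ k, cap k < p) (k : ℕ) (f : Co p ι)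
    (hf : Alt f) (h0 : f [] = 0) (hT : ∀ l, Valid cap l → T (k + 1) f l = 0) :
    ∃ f' : Co p ι, Alt f' ∧ f' [] = 0 ∧ ∀ l, Valid cap l → T k f' l = f l := by
  have tsw : ∀ u a b t, tf (u ++ a :: b :: t : List (ι × ZMod p)) = tf (u ++ b :: a :: t) := by
    intro u a b t
    apply tf_congr
    intro x
    simp only [List.mem_append, List.mem_cons]
    tauto
  by_cases hk : Even k
  · have hk1 : ¬ Even (k + 1) := by simpa [Nat.even_add_one] using hk
    refine ⟨fun l => ∑ j : ZMod p, (if j.val < (tf l).val then 1 else 0) *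
      f (l.map (shv (j - tf l))), ⟨?_, ?_⟩, ?_, ?_⟩
    · intro u a t
      apply Finset.sum_eq_zero
      intro j _
      rw [List.map_append, List.map_cons, List.map_cons, hf.1, mul_zero]
    · intro u a b t
      simp only [tsw u a b t]
      rw [← Finset.sum_neg_distrib]
      apply Finset.sum_congr rfl
      intro j _
      simp only [List.map_append, List.map_cons]
      rw [hf.2, mul_neg]
    · simp [h0]
    · intro l hl
      rw [T_even hk, Pi.sub_apply, sh_apply]
      by_cases hn : l = []
      · subst hn; simp [h0]
      have hS := hT l hl
      rw [T_odd hk1, Finset.sum_apply] at hS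
      have e : ∀ j : ZMod p, f ((l.map (shv 1)).map (shv (j - (tf l + 1))))
          = f (l.map (shv (j - tf l))) := by
        intro j
        have := congrFun (sh_sh 1 (j - (tf l + 1)) f) l
        simp only [sh_apply] at this
        rw [this]
        congr 3; ring
      have hS' : ∑ j : ZMod p, f (l.map (shv (j - tf l))) = 0 := by
        rw [← hS]
        exact Fintype.sum_equiv (Equiv.subRight (tf l)) _ _ (fun j => rfl)
      simp only [tf_shift hcap hl hn, e]
      rw [← Finset.sum_sub_distrib]
      simp only [← sub_mul, ind_identity]
      simp only [sub_mul, Finset.sum_sub_distrib, ← Finset.mul_sum, hS', mul_zero, sub_zero]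
      simp only [ite_mul, one_mul, zero_mul, Finset.sum_ite_eq',
        Finset.mem_univ, if_true, sub_self]
      exact congrFun (sh_zero f) l
  · have hk1 : Even (k + 1) := by simpa [Nat.even_add_one] using hk
    refine ⟨fun l => (if tf l = 0 then 1 else 0) * f l, ⟨?_, ?_⟩, ?_, ?_⟩
    · intro u a t
      simp only [hf.1, mul_zero]
    · intro u a b t
      simp only [tsw u a b t]
      rw [hf.2, mul_neg]
    · simp [h0]
    · intro l hl
      rw [T_odd hk, Finset.sum_apply]
      by_cases hn : l = []
      · subst hn; simp [h0]
      have hinv : ∀ l, Valid cap l → f (l.map (shv 1)) = f l := by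
        intro l hl
        have := hT l hl
        rw [T_even hk1] at this
        exact sub_eq_zero.1 this
      simp only [sh_apply, tf_shift hcap hl hn, inv_sh hinv _ l hl]
      have : ∀ j : ZMod p, tf l + j = 0 ↔ j = - tf l := by
        intro j
        rw [add_comm, eq_neg_iff_add_eq_zero]
      simp [this]

/-- The core argument. -/
lemma core [Inhabited κ] [Fintype κ] (n : ℕ) [NeZero n] {cap : κ → ℕ} (hcap : ∀ k, cap k < p)
    (Λ : List (Fin n × ZMod p) → κ × ZMod p)
    (hΛ : ∀ j w, w ≠ [] → Λ (w.map (shv j)) = shv j (Λ w))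
    (hloc : ∀ k (f : Co p κ) (w : List (Fin n × ZMod p)), (w.map Prod.fst).Nodup →
      (∀ l, Valid cap l → l.length = k → f l = 0) → Sd Λ k f w = 0) :
    n ≤ ∑ k, cap k := by
  have main : ∀ k, k < n → ∃ f : Co p κ, Alt f ∧ f [] = 0 ∧
      (∀ l, Valid cap l → T (k + 1) f l = 0) ∧ del f = 0 ∧ hh n k (Sd Λ (k + 1) f) = 1 := by
    intro k
    induction k with
    | zero =>
      intro _
      let e : Co p κ := fun l => match l with
        | [] => 1
        | _ :: _ => 0
      have he : Alt e := by
        constructor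
        · intro u a t; cases u <;> rfl
        · intro u a b t; cases u <;> simp [e]
      refine ⟨del e, he.del, rfl, ?_, del_del e, ?_⟩
      · intro l _
        rw [← del_T]
        have : T (0 + 1) e = 0 := by
          rw [T_odd (by simp)]
          funext l
          rw [Finset.sum_apply]
          cases l <;> simp [e]
        rw [this]; simp
      · rw [hh_zero, Sd_del, del_cons, del_nil, Sd_zero_nil, sub_zero]
    | succ k ih =>
      intro hk
      obtain ⟨f, hA, h0, hT, hd, hv⟩ := ih (by omega)
      obtain ⟨f', hA', h0', hT'⟩ := solve hcap k f hA h0 hT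
      refine ⟨del f', hA'.del, rfl, ?_, del_del f', ?_⟩
      · intro l hl
        rw [show k + 1 + 1 = k + 2 from rfl, T_add_two, ← del_T]
        have : del (T k f' - f) l = 0 := by
          apply del_local
          intro l' hl'
          rw [Pi.sub_apply, hT' _ (hl.sublist hl'), sub_self]
        rwa [map_sub, hd, sub_zero] at this
      · rw [Sd_del, hh_del, ← Sd_T Λ hΛ, ← hv, ← sub_eq_zero, ← map_sub, ← map_sub]
        apply hh_local n k (by omega)
        intro w hw _ _
        apply hloc _ _ _ hw
        intro l hl _
        rw [Pi.sub_apply, hT' _ hl, sub_self]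
  by_contra hcon
  have hn : 0 < n := Nat.pos_of_ne_zero (NeZero.ne n)
  obtain ⟨f, hA, h0, hT, hd, hv⟩ := main (n - 1) (by omega)
  have : hh n (n - 1) (Sd Λ (n - 1 + 1) f) = 0 := by
    apply hh_local n _ (by omega)
    intro w hw _ _
    apply hloc _ _ _ hw
    intro l hl hlen
    apply hA.zero_of_not_nodup
    intro hnd
    have := hl.length_le hnd
    omega
  rw [this] at hv
  exact zero_ne_one hv

/-- Nonzero vectors. -/
abbrev Vec (p n : ℕ) := {x : Fin n → Option (ZMod p) // ∃ i, x i ≠ none}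

lemma lookup_mem {n : ℕ} (w : List (Fin n × ZMod p)) (i a) (h : w.lookup i = some a) :
    (i, a) ∈ w := by
  induction w with
  | nil => simp at h
  | cons b w ih =>
    obtain ⟨j, c⟩ := b
    rw [List.lookup_cons] at h
    by_cases hij : i = j
    · subst hij
      simp at h
      simp [h]
    · have : (i == j) = false := by simpa using hij
      rw [this] at h
      exact List.mem_cons_of_mem _ (ih h)

lemma lookup_of_mem {n : ℕ} (w : List (Fin n × ZMod p)) (hw : (w.map Prod.fst).Nodup) (i a)
    (h : (i, a) ∈ w) : w.lookup i = some a := by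
  induction w with
  | nil => simp at h
  | cons b w ih =>
    obtain ⟨j, c⟩ := b
    rw [List.map_cons, List.nodup_cons] at hw
    rw [List.lookup_cons]
    rw [List.mem_cons] at h
    rcases h with h | h
    · simp only [Prod.mk.injEq] at h
      obtain ⟨rfl, rfl⟩ := h
      simp
    · have hij : i ≠ j := by
        rintro rfl
        exact hw.1 (List.mem_map.2 ⟨(i, a), h, rfl⟩)
      have : (i == j) = false := by simpa using hij
      rw [this]
      exact ih hw.2 h

lemma lookup_shift {n : ℕ} (w : List (Fin n × ZMod p)) (j : ZMod p) (i) :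
    (w.map (shv j)).lookup i = (w.lookup i).map (· + j) := by
  induction w with
  | nil => rfl
  | cons b w ih =>
    obtain ⟨k, c⟩ := b
    simp only [List.map_cons, shv, List.lookup_cons] at ih ⊢
    cases (i == k) <;> simp [ih]

lemma lookup_nonzero {n : ℕ} (w : List (Fin n × ZMod p)) (hw : w ≠ []) :
    ∃ i, w.lookup i ≠ none := by
  obtain ⟨⟨k, a⟩, t, rfl⟩ := List.exists_cons_of_ne_nil hw
  exact ⟨k, by simp⟩

def Sub {n : ℕ} (x y : Vec p n) : Prop := ∀ i a, x.1 i = some a → y.1 i = some a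

lemma Sd_local {n : ℕ} (lab : Vec p n → κ × ZMod p) (Λ : List (Fin n × ZMod p) → κ × ZMod p)
    (hΛ : ∀ w (hw : w ≠ []), Λ w = lab ⟨fun i => w.lookup i, lookup_nonzero w hw⟩)
    (k : ℕ) (f : Co p κ) (w : List (Fin n × ZMod p)) (hw : (w.map Prod.fst).Nodup)
    (h : ∀ X : List (Vec p n), X.Pairwise (fun y x => Sub x y) →
      (∀ x ∈ X, ∀ i a, x.1 i = some a → w.lookup i = some a) → X.length = k →
      f (X.map lab) = 0) : Sd Λ k f w = 0 := by
  induction k generalizing f w with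
  | zero =>
    cases w with
    | nil => exact h [] (by simp) (by simp) rfl
    | cons a l => rfl
  | succ k ih =>
    by_cases hne : w = []
    · subst hne; rfl
    rw [Sd_succ]
    apply del_local
    intro w' hw'
    have hmono : ∀ i a, w'.lookup i = some a → w.lookup i = some a := fun i a hi =>
      lookup_of_mem w hw i a (hw'.subset (lookup_mem w' i a hi))
    apply ih _ _ (hw.sublist (hw'.map _))
    intro X hX hXw hlen
    rw [pre_apply, hΛ w hne, ← List.map_cons]
    apply h
    · rw [List.pairwise_cons]
      exact ⟨fun x hx i a hi => hmono i a (hXw x hx i a hi), hX⟩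
    · intro x hx i a hi
      rw [List.mem_cons] at hx
      rcases hx with rfl | hx
      · exact hi
      · exact hmono i a (hXw x hx i a hi)
    · simp [hlen]

end ZpT

/-- **The `Z_p`-Tucker lemma.** Here the cyclic group `Z_p` of `p`-th roots of unity is
encoded by `ZMod p` (with `j` corresponding to `ω^j`, the generator `ω` acting as `+1`),
a vector of `(Z_p ∪ {0})^n` is encoded as a map `Fin n → Option (ZMod p)` (`none` being
`0`), and the set `[m]` is encoded by `Fin m` (with `k ∈ Fin m` corresponding to
`k + 1 ∈ [m]`). The map `λ = (s, v)` is defined on the nonzero vectors; it is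
`Z_p`-equivariant (`hequiv`), and satisfies the two hypotheses `h1` and `h2` about
chains `x⁽¹⁾ ⊆ x⁽²⁾ ⊆ ⋯` (where `x ⊆ y` means `x i = some a → y i = some a`). Then
`α + (m − α)(p − 1) ≥ n`. -/
theorem zp_tucker_lemma (p n m α : ℕ) (hp : p.Prime) (hn : 1 ≤ n) (hm : 1 ≤ m)
    (hα : α ≤ m)
    (s : {x : Fin n → Option (ZMod p) // ∃ i, x i ≠ none} → ZMod p)
    (v : {x : Fin n → Option (ZMod p) // ∃ i, x i ≠ none} → Fin m)
    (hequiv : ∀ x y : {x : Fin n → Option (ZMod p) // ∃ i, x i ≠ none},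
      (∀ i, y.1 i = (x.1 i).map (· + 1)) → s y = s x + 1 ∧ v y = v x)
    (h1 : ∀ x y : {x : Fin n → Option (ZMod p) // ∃ i, x i ≠ none},
      (∀ i a, x.1 i = some a → y.1 i = some a) →
      v x = v y → (v x : ℕ) + 1 ≤ α → s x = s y)
    (h2 : ∀ c : Fin p → {x : Fin n → Option (ZMod p) // ∃ i, x i ≠ none},
      (∀ i j : Fin p, i ≤ j → ∀ k a, (c i).1 k = some a → (c j).1 k = some a) →
      (∀ i j : Fin p, v (c i) = v (c j)) →
      α + 1 ≤ (v (c ⟨0, hp.pos⟩) : ℕ) + 1 →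
      ¬ Function.Injective fun i => s (c i)) :
    n ≤ α + (m - α) * (p - 1) := by
  classical
  have : Fact p.Prime := ⟨hp⟩
  have : NeZero n := ⟨by omega⟩
  have : NeZero m := ⟨by omega⟩
  have : Inhabited (Fin m) := ⟨0⟩
  let cap : Fin m → ℕ := fun k => if k.val < α then 1 else p - 1
  have hp1 := hp.one_lt
  have hcap : ∀ k, cap k < p := by
    intro k
    simp only [cap]
    split_ifs <;> omega
  have hsum : ∑ k, cap k = α + (m - α) * (p - 1) := by
    rw [Fin.sum_univ_eq_sum_range (fun k => if k < α then 1 else p - 1) m,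
      ← Finset.sum_range_add_sum_Ico _ hα]
    congr 1
    · rw [Finset.sum_congr rfl (g := fun _ => 1)]
      · simp
      · intro x hx
        rw [if_pos (Finset.mem_range.1 hx)]
    · rw [Finset.sum_congr rfl (g := fun _ => p - 1)]
      · simp
      · intro x hx
        rw [if_neg (not_lt.2 (Finset.mem_Ico.1 hx).1)]
  rw [← hsum]
  let lab : ZpT.Vec p n → Fin m × ZMod p := fun x => (v x, s x)
  let Λ : List (Fin n × ZMod p) → Fin m × ZMod p := fun w =>
    if hw : w ≠ [] then lab ⟨fun i => w.lookup i, ZpT.lookup_nonzero w hw⟩ else default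
  have hΛ : ∀ w (hw : w ≠ []), Λ w = lab ⟨fun i => w.lookup i, ZpT.lookup_nonzero w hw⟩ := by
    intro w hw
    simp only [Λ, dif_pos hw]
  have hlabel : ∀ N : ℕ, ∀ x y : ZpT.Vec p n, (∀ i, y.1 i = (x.1 i).map (· + (N : ZMod p))) →
      s y = s x + N ∧ v y = v x := by
    intro N
    induction N with
    | zero =>
      intro x y h
      have : y = x := by
        apply Subtype.ext
        funext i
        rw [h i]
        simp
      simp [this]
    | succ N ih =>
      intro x y h
      let z : ZpT.Vec p n := ⟨fun i => (x.1 i).map (· + (N : ZMod p)), by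
        obtain ⟨i, hi⟩ := x.2
        exact ⟨i, by simpa using hi⟩⟩
      obtain ⟨a1, a2⟩ := ih x z (fun i => rfl)
      obtain ⟨b1, b2⟩ := hequiv z y (fun i => by
        rw [h i]
        simp only [z, Option.map_map]
        congr 1
        funext a
        simp [add_assoc])
      refine ⟨?_, b2.trans a2⟩
      rw [b1, a1]
      push_cast
      ring
  apply ZpT.core n hcap Λ
  · intro j w hw
    have hw' : w.map (ZpT.shv j) ≠ [] := by simpa using hw
    rw [hΛ _ hw, hΛ _ hw']
    have := hlabel j.val ⟨fun i => w.lookup i, ZpT.lookup_nonzero w hw⟩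
      ⟨fun i => (w.map (ZpT.shv j)).lookup i, ZpT.lookup_nonzero _ hw'⟩ (fun i => by
        rw [ZMod.natCast_zmod_val]
        exact ZpT.lookup_shift w j i)
    rw [ZMod.natCast_zmod_val] at this
    simp only [lab, ZpT.shv, this]
  · intro k f w hw hf
    apply ZpT.Sd_local lab Λ hΛ k f w hw
    intro X hX _ hlen
    apply hf _ _ (by simpa using hlen)
    intro q
    by_contra hcon
    rw [not_le] at hcon
    have hget : ∀ i j : Fin X.length, i ≤ j → ZpT.Sub (X.get j) (X.get i) := by
      intro i j hij
      rcases hij.lt_or_eq with h | h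
      · exact List.pairwise_iff_get.1 hX i j h
      · subst h
        exact fun _ _ h => h
    have hidx : ∀ a ∈ ZpT.B q (X.map lab), ∃ i : Fin X.length,
        v (X.get i) = q ∧ s (X.get i) = a := by
      intro a ha
      rw [ZpT.mem_B, List.mem_map] at ha
      obtain ⟨x, hx, hxa⟩ := ha
      obtain ⟨i, rfl⟩ := List.get_of_mem hx
      simp only [lab, Prod.mk.injEq] at hxa
      exact ⟨i, hxa.1, hxa.2⟩
    by_cases hq : q.val < α
    · simp only [cap, if_pos hq] at hcon
      obtain ⟨a, ha, b, hb, hab⟩ := Finset.one_lt_card.1 hcon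
      obtain ⟨i, hi1, hi2⟩ := hidx a ha
      obtain ⟨j, hj1, hj2⟩ := hidx b hb
      apply hab
      rw [← hi2, ← hj2]
      rcases le_total i j with h | h
      · exact (h1 _ _ (hget i j h) (hj1.trans hi1.symm) (by rw [hj1]; omega)).symm
      · exact h1 _ _ (hget j i h) (hi1.trans hj1.symm) (by rw [hi1]; omega)
    · simp only [cap, if_neg hq] at hcon
      have hfull : ZpT.B q (X.map lab) = Finset.univ := by
        apply Finset.eq_univ_of_card
        have := Finset.card_le_univ (ZpT.B q (X.map lab))
        rw [ZMod.card] at this ⊢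
        omega
      have hidx' : ∀ a, ∃ i : Fin X.length, v (X.get i) = q ∧ s (X.get i) = a := by
        intro a
        exact hidx a (by rw [hfull]; simp)
      choose idx hi1 hi2 using hidx'
      have hinj : Function.Injective idx := by
        intro a b hab
        rw [← hi2 a, ← hi2 b, hab]
      let I : Finset (Fin X.length) := Finset.univ.image idx
      have hI : I.card = p := by
        rw [Finset.card_image_of_injective _ hinj, Finset.card_univ, ZMod.card]
      have hmem : ∀ j, ∃ a, idx a = I.orderEmbOfFin hI j := by
        intro j
        have := Finset.orderEmbOfFin_mem I hI j
        obtain ⟨a, _, ha⟩ := Finset.mem_image.1 this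
        exact ⟨a, ha⟩
      let c : Fin p → ZpT.Vec p n := fun j => X.get (I.orderEmbOfFin hI j.rev)
      have hcv : ∀ j, v (c j) = q := by
        intro j
        obtain ⟨a, ha⟩ := hmem j.rev
        simp only [c, ← ha]
        exact hi1 a
      refine h2 c ?_ ?_ ?_ ?_
      · intro i j hij
        apply hget
        exact (I.orderEmbOfFin hI).monotone (Fin.rev_le_rev.2 hij)
      · intro i j
        rw [hcv, hcv]
      · rw [hcv]; omega
      · intro i j hij
        obtain ⟨a, ha⟩ := hmem i.rev
        obtain ⟨b, hb⟩ := hmem j.rev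
        simp only [c, ← ha, ← hb] at hij
        rw [hi2, hi2] at hij
        subst hij
        exact Fin.rev_injective ((I.orderEmbOfFin hI).injective (ha.symm.trans hb))
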